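/- arXiv:1812.08986 — 5 statements merged into one kernel-verified Lean document; each statement's English description precedes it below -/
import Mathlib

section
/- Let g₀ : ℝ^d × [0,π] → [0,∞] be measurable, let e ∈ S^k, r ≥ 0, s ∈ [0,π], and let B ⊆ ℝ^d be a measurable set with 0 < |B| < ∞. Then (1/(|B|·σ_k)) ∬ 1{y₁ ∈ B, ‖y₁−y₂‖ ≤ r, d(u₁,u₂) ≤ s} g₀(y₁−y₂, d(u₁,u₂)) dμ(y₁,u₁) dμ(y₂,u₂) = K_e(r,s), where the double integral is over (ℝ^d × S^k) × (ℝ^d × S^k). In particular, the left-hand side does not depend on the choice of B. -/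
open MeasureTheory Real Set
open scoped ENNReal NNReal RealInnerProductSpace Classical

noncomputable section

/-- `d`-dimensional Euclidean space. -/
abbrev Eucl (d : ℕ) : Type := EuclideanSpace ℝ (Fin d)

/-- The unit `k`-sphere in `ℝ^{k+1}`. -/
abbrev Sph (k : ℕ) : Type := Metric.sphere (0 : EuclideanSpace ℝ (Fin (k+1))) 1

/-- The surface measure `ν` on the `k`-sphere: the `k`-dimensional Hausdorff measure. -/
noncomputable def sphMeasure (k : ℕ) : Measure (Sph k) := μH[k]

/-- The geodesic distance `d(u,v) = arccos ⟨u,v⟩` on the `k`-sphere. -/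
noncomputable def gd {k : ℕ} (u v : Sph k) : ℝ :=
  Real.arccos ⟪(u : EuclideanSpace ℝ (Fin (k+1))), (v : EuclideanSpace ℝ (Fin (k+1)))⟫

/-- The space-sphere K-function with reference direction `e`. -/
noncomputable def ssK {d k : ℕ} (g₀ : Eucl d → ℝ → ℝ≥0∞) (e : Sph k) (r s : ℝ) : ℝ≥0∞ :=
  ∫⁻ y in {y : Eucl d | ‖y‖ ≤ r}, ∫⁻ u in {u : Sph k | gd u e ≤ s}, g₀ y (gd u e) ∂(sphMeasure k)

/-!
The double integral factorizes because the inner integral does not depend on the outer point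
`(y₁, u₁)`, `y₁ ∈ B`: the substitution `y₂ ↦ y₁ - y₂` removes `y₁`, and the reflection exchanging
`u₁` with the reference direction `e` removes `u₁`, as it preserves both Hausdorff measure and inner
products. What is left over is the constant `|B| σ_k`, which may be divided out because
`0 < σ_k < ∞`. Finiteness holds as the sphere is compact and locally a Lipschitz image of `ℝ^k`
under inverse stereographic projection; positivity holds as the orthogonal projection to a
hyperplane does not increase Hausdorff measure and maps the sphere onto the unit ball.
-/

open Metric Module Topology
open scoped EuclideanSpace

section LocallyLipschitz

variable {X Y : Type*} [EMetricSpace X] [MeasurableSpace X] [BorelSpace X]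
  [EMetricSpace Y] [MeasurableSpace Y] [BorelSpace Y]

lemma exists_mem_nhds_hausdorffMeasure_image_lt_top {f : X → Y} (hf : LocallyLipschitz f)
    {d : ℝ} (hd : 0 ≤ d) [IsLocallyFiniteMeasure (μH[d] : Measure X)] (x : X) :
    ∃ t ∈ 𝓝 x, μH[d] (f '' t) < ∞ := by
  obtain ⟨K, s, hs, hfs⟩ := hf x
  obtain ⟨t, ht, htop⟩ := (μH[d] : Measure X).finiteAt_nhds x
  refine ⟨s ∩ t, Filter.inter_mem hs ht, ?_⟩
  calc μH[d] (f '' (s ∩ t))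
      ≤ (K : ℝ≥0∞) ^ d * μH[d] (s ∩ t) :=
        (hfs.mono inter_subset_left).hausdorffMeasure_image_le hd
    _ < ∞ := ENNReal.mul_lt_top (ENNReal.rpow_lt_top_of_nonneg hd ENNReal.coe_ne_top)
        ((measure_mono inter_subset_right).trans_lt htop)

end LocallyLipschitz

section SphereIsometry

variable {R V W : Type*} [Semiring R] [SeminormedAddCommGroup V] [Module R V]
  [SeminormedAddCommGroup W] [Module R W]

/-- The isometry between the spheres of radius `r` about the origin obtained by restricting a
linear isometry of the ambient spaces. -/
def sphereIsometryEquiv (L : V ≃ₗᵢ[R] W) (r : ℝ) : sphere (0 : V) r ≃ᵢ sphere (0 : W) r where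
  toEquiv := L.toEquiv.subtypeEquiv fun x ↦ by simp
  isometry_toFun x y := L.isometry x y

lemma coe_sphereIsometryEquiv_apply (L : V ≃ₗᵢ[R] W) {r : ℝ} (x : sphere (0 : V) r) :
    (sphereIsometryEquiv L r x : W) = L x := rfl

end SphereIsometry

section Sphere

variable {E : Type*} [NormedAddCommGroup E] [InnerProductSpace ℝ E]

lemma locallyLipschitz_stereographic_symm {v : E} (hv : ‖v‖ = 1) :
    LocallyLipschitz (stereographic hv).symm := by
  intro w
  have hsmooth : ContDiff ℝ 1 fun w : (ℝ ∙ v)ᗮ ↦ stereoInvFunAux v w :=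
    contDiff_stereoInvFunAux.comp (ℝ ∙ v)ᗮ.subtypeL.contDiff
  exact hsmooth.locallyLipschitz w

lemma ball_subset_orthogonalProjectionOnto_image_sphere {v : E} (hv : ‖v‖ = 1) :
    ball 0 1 ⊆ (ℝ ∙ v)ᗮ.orthogonalProjectionOnto '' sphere (0 : E) 1 := by
  intro w hw
  have hw1 : ‖(w : E)‖ < 1 := by simpa using hw
  have hrad : 0 ≤ 1 - ‖(w : E)‖ ^ 2 := by nlinarith [norm_nonneg (w : E)]
  have horth : ⟪(w : E), √(1 - ‖(w : E)‖ ^ 2) • v⟫ = 0 := by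
    rw [inner_smul_right, Submodule.mem_orthogonal_singleton_iff_inner_left.mp w.2, mul_zero]
  refine ⟨w + √(1 - ‖(w : E)‖ ^ 2) • v, ?_, ?_⟩
  · rw [mem_sphere_zero_iff_norm, ← sq_eq_sq₀ (norm_nonneg _) zero_le_one, sq,
      norm_add_sq_eq_norm_sq_add_norm_sq_real horth, norm_smul, hv, mul_one, ← sq, ← sq,
      Real.norm_eq_abs, sq_abs, Real.sq_sqrt hrad]
    ring
  · rw [map_add, map_smul, Submodule.orthogonalProjectionOnto_mem_subspace_eq_self,
      Submodule.orthogonalProjectionOnto_orthogonalComplement_singleton_eq_zero, smul_zero,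
      add_zero]

lemma exists_linearIsometryEquiv_apply_eq {u v : E} (h : ‖u‖ = ‖v‖) :
    ∃ L : E ≃ₗᵢ[ℝ] E, L u = v :=
  ⟨(ℝ ∙ (u - v))ᗮ.reflection, Submodule.reflection_sub h⟩

variable [MeasurableSpace E] [BorelSpace E]

theorem lintegral_inner_sphere_eq (d : ℝ) {r : ℝ} (f : ℝ → ℝ≥0∞) (u v : sphere (0 : E) r) :
    ∫⁻ w : sphere (0 : E) r, f ⟪(u : E), w⟫ ∂μH[d] =
      ∫⁻ w : sphere (0 : E) r, f ⟪(v : E), w⟫ ∂μH[d] := by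
  obtain ⟨L, hL⟩ := exists_linearIsometryEquiv_apply_eq (u := (u : E)) (v := v) (by simp)
  let φ := sphereIsometryEquiv L r
  rw [← (φ.measurePreserving_hausdorffMeasure d).lintegral_comp_emb
    φ.toHomeomorph.measurableEmbedding fun w ↦ f ⟪(v : E), w⟫]
  simp only [φ, coe_sphereIsometryEquiv_apply, ← hL, LinearIsometryEquiv.inner_map_map]

variable {n : ℕ} [Fact (finrank ℝ E = n + 1)]

lemma isAddHaarMeasure_hausdorffMeasure_orthogonal_span_singleton {v : E} (hv : v ≠ 0) :
    (μH[n] : Measure (ℝ ∙ v)ᗮ).IsAddHaarMeasure := by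
  have : FiniteDimensional ℝ E := .of_fact_finrank_eq_succ n
  rw [← Submodule.finrank_orthogonal_span_singleton (𝕜 := ℝ) (n := n) hv]
  infer_instance

instance isLocallyFiniteMeasure_hausdorffMeasure_sphere :
    IsLocallyFiniteMeasure (μH[n] : Measure (sphere (0 : E) 1)) where
  finiteAtNhds p := by
    have hpole : ‖((-p : sphere (0 : E) 1) : E)‖ = 1 := norm_eq_of_mem_sphere (-p)
    have : FiniteDimensional ℝ E := .of_fact_finrank_eq_succ n
    have := isAddHaarMeasure_hausdorffMeasure_orthogonal_span_singleton (n := n)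
      (ne_zero_of_mem_unit_sphere (-p))
    obtain ⟨t, ht, htop⟩ := exists_mem_nhds_hausdorffMeasure_image_lt_top
      (locallyLipschitz_stereographic_symm hpole) n.cast_nonneg 0
    have hp : (stereographic hpole).symm 0 = p := by
      rw [← stereographic_neg_apply p]
      exact (stereographic hpole).left_inv (ne_neg_of_mem_unit_sphere ℝ p)
    have himage := (isOpenEmbedding_stereographic_symm hpole).image_mem_nhds.mpr ht
    rw [hp] at himage
    exact ⟨_, himage, htop⟩

lemma hausdorffMeasure_sphere_univ_ne_zero :
    (μH[n] : Measure (sphere (0 : E) 1)) univ ≠ 0 := by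
  have : Nontrivial E := nontrivial_of_finrank_eq_succ (R := ℝ) (n := n) Fact.out
  obtain ⟨v, hv⟩ := exists_norm_eq E zero_le_one
  have := isAddHaarMeasure_hausdorffMeasure_orthogonal_span_singleton (n := n)
    (norm_ne_zero_iff.mp (hv.trans_ne one_ne_zero))
  refine ne_of_gt ?_
  calc 0 < μH[n] (ball (0 : (ℝ ∙ v)ᗮ) 1) := measure_ball_pos _ _ one_pos
    _ ≤ μH[n] ((ℝ ∙ v)ᗮ.orthogonalProjectionOnto '' sphere (0 : E) 1) :=
      measure_mono (ball_subset_orthogonalProjectionOnto_image_sphere hv)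
    _ ≤ μH[n] (sphere (0 : E) 1) :=
      hausdorffMeasure_orthogonalProjectionOnto_le _ _ _ n.cast_nonneg
    _ = (μH[n] : Measure (sphere (0 : E) 1)) univ := by
      rw [← isometry_subtype_coe.hausdorffMeasure_image (f := ((↑) : sphere (0 : E) 1 → E))
        (.inl n.cast_nonneg), image_univ, Subtype.range_coe]

end Sphere

section InvariantKernel

variable {G Y : Type*} [MeasurableSpace G] [AddGroup G] [MeasurableAdd G] [MeasurableNeg G]
  [MeasurableSpace Y] {μ : Measure G} [μ.IsAddLeftInvariant] [μ.IsNegInvariant]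
  {ν : Measure Y} [SFinite ν]
  {h : G → Y → Y → ℝ≥0∞} {H : G → ℝ≥0∞}

lemma lintegral_prod_sub_left_eq (hmeas : ∀ u, Measurable fun p : G × Y ↦ h p.1 u p.2)
    (hH : ∀ y u, ∫⁻ v, h y u v ∂ν = H y) (y : G) (u : Y) :
    ∫⁻ p, h (y - p.1) u p.2 ∂μ.prod ν = ∫⁻ x, H x ∂μ := by
  have hsub : Measurable fun p : G × Y ↦ (y - p.1, p.2) := by
    simp only [sub_eq_add_neg]
    fun_prop
  have hcomp : Measurable fun p : G × Y ↦ h (y - p.1) u p.2 := (hmeas u).comp hsub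
  rw [lintegral_prod _ hcomp.aemeasurable]
  simp only [hH]
  exact lintegral_sub_left_eq_self H y

theorem lintegral_lintegral_indicator_sub_eq
    (hmeas : ∀ u, Measurable fun p : G × Y ↦ h p.1 u p.2)
    (hH : ∀ y u, ∫⁻ v, h y u v ∂ν = H y) {B : Set G} (hB : MeasurableSet B) :
    ∫⁻ p₁, ∫⁻ p₂, B.indicator (fun y ↦ h (y - p₂.1) p₁.2 p₂.2) p₁.1 ∂μ.prod ν ∂μ.prod ν =
      (∫⁻ x, H x ∂μ) * (μ B * ν univ) := by
  have inner_eq (p₁ : G × Y) :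
      ∫⁻ p₂, B.indicator (fun y ↦ h (y - p₂.1) p₁.2 p₂.2) p₁.1 ∂μ.prod ν =
        (B ×ˢ univ).indicator (fun _ ↦ ∫⁻ x, H x ∂μ) p₁ := by
    by_cases hp : p₁.1 ∈ B
    · simp [hp, lintegral_prod_sub_left_eq hmeas hH]
    · simp [hp]
  simp only [inner_eq]
  rw [lintegral_indicator_const (hB.prod .univ), Measure.prod_prod]

end InvariantKernel

section SpaceSphere

variable {d k : ℕ}

instance isFiniteMeasure_sphMeasure : IsFiniteMeasure (sphMeasure k) :=
  inferInstanceAs (IsFiniteMeasure (μH[k] : Measure (Sph k)))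

lemma sphMeasure_univ_ne_zero : sphMeasure k univ ≠ 0 :=
  hausdorffMeasure_sphere_univ_ne_zero

lemma gd_comm (u v : Sph k) : gd u v = gd v u := by
  rw [gd, gd, real_inner_comm]

lemma continuous_gd (u : Sph k) : Continuous (gd u) :=
  Real.continuous_arccos.comp (by fun_prop)

lemma lintegral_gd_eq (f : ℝ → ℝ≥0∞) (u v : Sph k) :
    ∫⁻ w, f (gd u w) ∂sphMeasure k = ∫⁻ w, f (gd v w) ∂sphMeasure k :=
  lintegral_inner_sphere_eq k (f ∘ Real.arccos) u v

/-- The function `g₀` cut off to the window `‖y‖ ≤ r`, `t ≤ s` over which `ssK g₀ e r s`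
integrates. -/
def windowed {V : Type*} [Norm V] (g₀ : V → ℝ → ℝ≥0∞) (r s : ℝ) (y : V) (t : ℝ) : ℝ≥0∞ :=
  if ‖y‖ ≤ r ∧ t ≤ s then g₀ y t else 0

lemma measurable_windowed_comp {α V : Type*} [MeasurableSpace α] [NormedAddCommGroup V]
    [MeasurableSpace V] [OpensMeasurableSpace V] {g₀ : V → ℝ → ℝ≥0∞}
    (hg₀ : Measurable (Function.uncurry g₀)) (r s : ℝ) {f : α → V} (hf : Measurable f)
    {t : α → ℝ} (ht : Measurable t) : Measurable fun a ↦ windowed g₀ r s (f a) (t a) := by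
  have hwindow : MeasurableSet {a | ‖f a‖ ≤ r ∧ t a ≤ s} :=
    .inter (measurableSet_le hf.norm measurable_const) (measurableSet_le ht measurable_const)
  exact Measurable.ite hwindow (hg₀.comp (hf.prodMk ht)) measurable_const

lemma measurable_windowed_gd {g₀ : Eucl d → ℝ → ℝ≥0∞} (hg₀ : Measurable (Function.uncurry g₀))
    (r s : ℝ) (u : Sph k) :
    Measurable fun p : Eucl d × Sph k ↦ windowed g₀ r s p.1 (gd u p.2) :=
  measurable_windowed_comp hg₀ r s measurable_fst
    ((continuous_gd u).measurable.comp measurable_snd)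

lemma ssK_eq_lintegral_windowed (g₀ : Eucl d → ℝ → ℝ≥0∞) (e : Sph k) (r s : ℝ) :
    ssK g₀ e r s = ∫⁻ y, ∫⁻ u, windowed g₀ r s y (gd e u) ∂sphMeasure k := by
  have hcap : MeasurableSet {u : Sph k | gd e u ≤ s} :=
    measurableSet_le (continuous_gd e).measurable measurable_const
  have hball : MeasurableSet {y : Eucl d | ‖y‖ ≤ r} :=
    measurableSet_le measurable_norm measurable_const
  simp only [ssK, gd_comm _ e]
  rw [← lintegral_indicator hball]
  refine lintegral_congr fun y ↦ ?_
  by_cases hy : ‖y‖ ≤ r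
  · simp [windowed, indicator, hy, ← lintegral_indicator hcap]
  · simp [windowed, indicator, hy]

end SpaceSphere

/-- The normalized double-integral representation of the space-sphere K-function over an
arbitrary set `B` of positive finite volume; in particular the left-hand side does not
depend on the choice of `B`. -/
theorem ssK_eq_double_integral (d k : ℕ) (hd : 1 ≤ d) (hk : 1 ≤ k)
    (g₀ : Eucl d → ℝ → ℝ≥0∞) (hg₀ : Measurable (Function.uncurry g₀))
    (e : Sph k) (r : ℝ) (hr : 0 ≤ r) (s : ℝ) (hs₀ : 0 ≤ s) (hsπ : s ≤ π)
    (B : Set (Eucl d)) (hB : MeasurableSet B) (hB₀ : 0 < volume B) (hB₁ : volume B < ⊤) :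
    (∫⁻ p₁, (∫⁻ p₂,
        (if p₁.1 ∈ B ∧ ‖p₁.1 - p₂.1‖ ≤ r ∧ gd p₁.2 p₂.2 ≤ s then
          g₀ (p₁.1 - p₂.1) (gd p₁.2 p₂.2) else 0)
        ∂((volume : Measure (Eucl d)).prod (sphMeasure k)))
      ∂((volume : Measure (Eucl d)).prod (sphMeasure k)))
      / (volume B * sphMeasure k Set.univ) = ssK g₀ e r s := by
  have integrand_eq (p₁ p₂ : Eucl d × Sph k) :
      (if p₁.1 ∈ B ∧ ‖p₁.1 - p₂.1‖ ≤ r ∧ gd p₁.2 p₂.2 ≤ s then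
          g₀ (p₁.1 - p₂.1) (gd p₁.2 p₂.2) else 0) =
        B.indicator (fun y ↦ windowed g₀ r s (y - p₂.1) (gd p₁.2 p₂.2)) p₁.1 := by
    by_cases hy : p₁.1 ∈ B <;> simp [windowed, hy]
  simp only [integrand_eq]
  rw [lintegral_lintegral_indicator_sub_eq (h := fun y u v ↦ windowed g₀ r s y (gd u v))
    (measurable_windowed_gd hg₀ r s) (fun y u ↦ lintegral_gd_eq (windowed g₀ r s y) u e) hB,
    ← ssK_eq_lintegral_windowed]
  exact ENNReal.mul_div_cancel_right (mul_ne_zero hB₀.ne' sphMeasure_univ_ne_zero)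
    (ENNReal.mul_ne_top hB₁.ne (measure_ne_top _ _))
end
end

section
/- Let W ⊂ ℝ^d be a bounded measurable set and r ≥ 0 be such that |W ∩ (y + W)| > 0 for all y with ‖y‖ ≤ r, and let g₀₁ : ℝ^d → [0,∞] be measurable. Then ∫_W ∫_W 1{‖y₁−y₂‖ ≤ r} g₀₁(y₁−y₂) / |W ∩ ((y₁−y₂) + W)| dy₂ dy₁ = ∫_{‖y‖≤r} g₀₁(y) dy. (This is the unbiasedness of the translation-corrected estimator of the inhomogeneous spatial K-function, in deterministic Campbell form.) -/
open MeasureTheory Real Set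
open scoped ENNReal NNReal RealInnerProductSpace Classical

noncomputable section

/-!
For fixed `x`, the substitution `z = x - y` preserves the measure and turns the condition `y ∈ B`
into `x ∈ z + B`. After exchanging the order of integration, the `x`-integral over `A` is therefore
`μ (A ∩ (z + B))`, and the weight `1 / μ (A ∩ (z + B))` of the estimator cancels it.
-/

section SetCovariogram

open scoped Pointwise

variable {G : Type*} [AddGroup G] [MeasurableSpace G] {μ : Measure G} {A B : Set G}

/-- The cross-covariogram `z ↦ μ (A ∩ (z + B))` of two sets, by which the translation edge
correction divides. The set covariogram of a single window `W` is the case `A = B = W`. -/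
def setCovariogram (μ : Measure G) (A B : Set G) (z : G) : ℝ≥0∞ :=
  μ (A ∩ (z +ᵥ B))

theorem setCovariogram_ne_top (hA : μ A ≠ ∞) (z : G) : setCovariogram μ A B z ≠ ∞ :=
  measure_ne_top_of_subset inter_subset_left hA

theorem setCovariogram_eq_restrict_apply [MeasurableAdd G] (hB : MeasurableSet B) (z : G) :
    setCovariogram μ A B z = μ.restrict A (z +ᵥ B) := by
  rw [Measure.restrict_apply (hB.const_vadd z), inter_comm, setCovariogram]

theorem setLIntegral_comp_sub_left [MeasurableAdd G] [MeasurableNeg G] [μ.IsAddLeftInvariant]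
    [μ.IsNegInvariant] (hB : MeasurableSet B) (f : G → ℝ≥0∞) (x : G) :
    ∫⁻ y in B, f (x - y) ∂μ = ∫⁻ z, (z +ᵥ B).indicator 1 x * f z ∂μ := by
  have mem_sub_vadd_iff (y : G) : x ∈ (x - y) +ᵥ B ↔ y ∈ B := by
    simp [mem_vadd_set_iff_neg_vadd_mem]
  rw [← lintegral_indicator hB,
    ← lintegral_sub_left_eq_self (fun z ↦ (z +ᵥ B).indicator 1 x * f z) x]
  simp [indicator_apply, mem_sub_vadd_iff]

variable [MeasurableAdd₂ G] [MeasurableNeg G]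

theorem measurableSet_setOf_mem_vadd (hB : MeasurableSet B) :
    MeasurableSet {p : G × G | p.2 ∈ p.1 +ᵥ B} := by
  simp only [mem_vadd_set_iff_neg_vadd_mem, vadd_eq_add]
  exact (measurable_fst.neg.add measurable_snd) hB

theorem measurable_setCovariogram [SFinite μ] (hB : MeasurableSet B) :
    Measurable (setCovariogram μ A B) := by
  rw [funext (setCovariogram_eq_restrict_apply hB)]
  exact measurable_measure_prodMk_left (measurableSet_setOf_mem_vadd hB)

theorem setLIntegral_setLIntegral_comp_sub [SFinite μ] [μ.IsAddLeftInvariant] [μ.IsNegInvariant]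
    (hB : MeasurableSet B) {f : G → ℝ≥0∞} (hf : AEMeasurable f μ) :
    ∫⁻ x in A, ∫⁻ y in B, f (x - y) ∂μ ∂μ = ∫⁻ z, setCovariogram μ A B z * f z ∂μ := by
  have aemeasurable_integrand : AEMeasurable
      (fun p : G × G ↦ (p.2 +ᵥ B).indicator 1 p.1 * f p.2) ((μ.restrict A).prod μ) :=
    (measurable_one.indicator
      (measurable_swap (measurableSet_setOf_mem_vadd hB))).aemeasurable.mul hf.comp_snd
  calc ∫⁻ x in A, ∫⁻ y in B, f (x - y) ∂μ ∂μ
      = ∫⁻ x in A, ∫⁻ z, (z +ᵥ B).indicator 1 x * f z ∂μ ∂μ := by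
        simp only [setLIntegral_comp_sub_left hB]
    _ = ∫⁻ z, ∫⁻ x in A, (z +ᵥ B).indicator 1 x * f z ∂μ ∂μ :=
        lintegral_lintegral_swap aemeasurable_integrand
    _ = ∫⁻ z, setCovariogram μ A B z * f z ∂μ := by
        simp only [setCovariogram_eq_restrict_apply hB,
          lintegral_mul_const _ (measurable_one.indicator (hB.const_vadd _)),
          lintegral_indicator_one (hB.const_vadd _)]

theorem spatial_K_translation_estimator_unbiased_general [SFinite μ] [μ.IsAddLeftInvariant]
    [μ.IsNegInvariant] (hB : MeasurableSet B) {K : Set G} (hK : MeasurableSet K)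
    (hcov_ne_zero : ∀ᵐ z ∂μ.restrict K, setCovariogram μ A B z ≠ 0)
    (hcov_ne_top : ∀ᵐ z ∂μ.restrict K, setCovariogram μ A B z ≠ ∞)
    {g : G → ℝ≥0∞} (hg : AEMeasurable g (μ.restrict K)) :
    ∫⁻ x in A, ∫⁻ y in B, K.indicator (fun z ↦ g z / setCovariogram μ A B z) (x - y) ∂μ ∂μ =
      ∫⁻ z in K, g z ∂μ := by
  have aemeasurable_weighted :
      AEMeasurable (K.indicator fun z ↦ g z / setCovariogram μ A B z) μ :=
    (aemeasurable_indicator_iff hK).2 (hg.div (measurable_setCovariogram hB).aemeasurable)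
  rw [setLIntegral_setLIntegral_comp_sub hB aemeasurable_weighted]
  simp only [← indicator_mul_right K (setCovariogram μ A B)]
  rw [lintegral_indicator hK]
  refine lintegral_congr_ae ?_
  filter_upwards [hcov_ne_zero, hcov_ne_top] with z h_ne_zero h_ne_top
  exact ENNReal.mul_div_cancel h_ne_zero h_ne_top

end SetCovariogram

/-- Unbiasedness of the translation-corrected estimator of the inhomogeneous spatial
K-function, in deterministic Campbell form. -/
theorem spatial_K_translation_estimator_unbiased (d : ℕ) (hd : 1 ≤ d)
    (W : Set (Eucl d)) (hWm : MeasurableSet W) (hWb : Bornology.IsBounded W)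
    (r : ℝ) (hr : 0 ≤ r)
    (hpos : ∀ y : Eucl d, ‖y‖ ≤ r → 0 < volume (W ∩ ((fun z => y + z) '' W)))
    (g₀₁ : Eucl d → ℝ≥0∞) (hg : Measurable g₀₁) :
    (∫⁻ y₁ in W, ∫⁻ y₂ in W,
        if ‖y₁ - y₂‖ ≤ r then
          g₀₁ (y₁ - y₂) / volume (W ∩ ((fun z => (y₁ - y₂) + z) '' W)) else 0)
      = ∫⁻ y in {y : Eucl d | ‖y‖ ≤ r}, g₀₁ y := by
  have hball : MeasurableSet {y : Eucl d | ‖y‖ ≤ r} :=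
    measurableSet_le measurable_norm measurable_const
  rw [← spatial_K_translation_estimator_unbiased_general hWm hball
    (ae_restrict_of_forall_mem hball fun y hy ↦ (hpos y hy).ne')
    (.of_forall (setCovariogram_ne_top hWb.measure_lt_top.ne)) hg.aemeasurable]
  simp only [indicator_apply, mem_ofPred_eq]
  rfl
end
end

section
/- Assume ρ is first order separable, i.e. ρ(y,u)·E(N) = ρ₁(y)ρ₂(u) for all (y,u), and assume there is a measurable g₀ : ℝ^d × [0,π] → [0,∞) such that g(y₁,u₁,y₂,u₂) = g₀(y₁−y₂, d(u₁,u₂)) whenever ρ(y₁,u₁)ρ(y₂,u₂) > 0 (second order intensity-reweighted stationarity). Then for all y₁, y₂ ∈ ℝ^d with ρ₁(y₁)ρ₁(y₂) > 0, g₁(y₁,y₂) = ∬_{S^k×S^k} (ρ₂(u₁)/E(N)) (ρ₂(u₂)/E(N)) g₀(y₁−y₂, d(u₁,u₂)) dν(u₁) dν(u₂); in particular, on the set where ρ₁(y₁)ρ₁(y₂) > 0 the function g₁(y₁,y₂) depends on (y₁,y₂) only through the difference y₁ − y₂. -/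
open MeasureTheory Real Set
open scoped ENNReal NNReal RealInnerProductSpace Classical

noncomputable section

variable {d k : ℕ}

/-- The product measure `μ` on `ℝ^d × S^k` restricted to `W × S^k`. -/
noncomputable def muW (W : Set (Eucl d)) (k : ℕ) : Measure (Eucl d × Sph k) :=
  ((volume : Measure (Eucl d)).restrict W).prod (sphMeasure k)

/-- Marginal spatial intensity `ρ₁(y) = ∫_{S^k} ρ(y,u) dν(u)`. -/
noncomputable def rho1 (ρ : Eucl d × Sph k → ℝ≥0) (y : Eucl d) : ℝ≥0∞ :=
  ∫⁻ u, (ρ (y, u) : ℝ≥0∞) ∂(sphMeasure k)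

/-- Marginal spherical intensity `ρ₂(u) = ∫_W ρ(y,u) dy`. -/
noncomputable def rho2 (W : Set (Eucl d)) (ρ : Eucl d × Sph k → ℝ≥0) (u : Sph k) : ℝ≥0∞ :=
  ∫⁻ y in W, (ρ (y, u) : ℝ≥0∞)

/-- The expected number of points `E(N) = ∫_{W × S^k} ρ dμ`. -/
noncomputable def meanN (W : Set (Eucl d)) (ρ : Eucl d × Sph k → ℝ≥0) : ℝ≥0∞ :=
  ∫⁻ p, (ρ p : ℝ≥0∞) ∂(muW W k)

/-- The pair correlation function `g₁` of the spatial components. -/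
noncomputable def gfun1 (ρ : Eucl d × Sph k → ℝ≥0)
    (g : Eucl d × Sph k → Eucl d × Sph k → ℝ≥0) (y₁ y₂ : Eucl d) : ℝ≥0∞ :=
  if 0 < rho1 ρ y₁ * rho1 ρ y₂ then
    (∫⁻ u₁, (∫⁻ u₂, ((ρ (y₁, u₁) : ℝ≥0∞) * (ρ (y₂, u₂) : ℝ≥0∞) *
        (g (y₁, u₁) (y₂, u₂) : ℝ≥0∞)) ∂(sphMeasure k)) ∂(sphMeasure k))
      / (rho1 ρ y₁ * rho1 ρ y₂)
  else 0

/-- The pair correlation function `g₂` of the spherical components. -/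
noncomputable def gfun2 (W : Set (Eucl d)) (ρ : Eucl d × Sph k → ℝ≥0)
    (g : Eucl d × Sph k → Eucl d × Sph k → ℝ≥0) (u₁ u₂ : Sph k) : ℝ≥0∞ :=
  if 0 < rho2 W ρ u₁ * rho2 W ρ u₂ then
    (∫⁻ y₁ in W, ∫⁻ y₂ in W, ((ρ (y₁, u₁) : ℝ≥0∞) * (ρ (y₂, u₂) : ℝ≥0∞) *
        (g (y₁, u₁) (y₂, u₂) : ℝ≥0∞)))
      / (rho2 W ρ u₁ * rho2 W ρ u₂)
  else 0

/-- The second factorial moment `E{N(N−1)}`. -/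
noncomputable def momN2 (W : Set (Eucl d)) (ρ : Eucl d × Sph k → ℝ≥0)
    (g : Eucl d × Sph k → Eucl d × Sph k → ℝ≥0) : ℝ≥0∞ :=
  ∫⁻ p, (∫⁻ q, ((ρ p : ℝ≥0∞) * (ρ q : ℝ≥0∞) * (g p q : ℝ≥0∞)) ∂(muW W k)) ∂(muW W k)

/-- The constant `β = E(N)² / E{N(N−1)}`. -/
noncomputable def betaC (W : Set (Eucl d)) (ρ : Eucl d × Sph k → ℝ≥0)
    (g : Eucl d × Sph k → Eucl d × Sph k → ℝ≥0) : ℝ≥0∞ :=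
  (meanN W ρ) ^ 2 / momN2 W ρ g

/-!
If `ρ(y, u) = ρ₁(y) p(u)`, then `p` is the common mark density of all points: the weights
`ρ₁(y₁) ρ₁(y₂)` factor out of the double integral defining `g₁(y₁, y₂)` and cancel against the
denominator, leaving the `p ⊗ p`-average of `g`. The cancellation needs `ρ₁(y) < ∞`, which is
automatic: `ρ` is finite, so `ρ₁(y) = ∞` would force `p = 0`, hence `ρ₁(y) = 0`. First order
separability is the case `p = ρ₂ / E(N)`.
-/

section Lintegral

variable {α β : Type*} [MeasurableSpace α] [MeasurableSpace β] {μ : Measure α} {ν : Measure β}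

lemma lintegral_ne_top_of_eq_lintegral_mul {f p : α → ℝ≥0∞} (hf : ∀ x, f x ≠ ⊤)
    (hfp : ∀ x, f x = (∫⁻ x, f x ∂μ) * p x) : ∫⁻ x, f x ∂μ ≠ ⊤ := by
  intro htop
  have hp : ∀ x, p x = 0 := fun x ↦ by
    by_contra hpx
    exact hf x (by rw [hfp x, htop, ENNReal.top_mul hpx])
  have hf_zero : ∀ x, f x = 0 := fun x ↦ by rw [hfp x, hp x, mul_zero]
  simp [hf_zero] at htop

lemma lintegral_lintegral_const_mul_mul_const_mul {a b : ℝ≥0∞} (ha : a ≠ ⊤) (hb : b ≠ ⊤)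
    (p : α → ℝ≥0∞) (q : β → ℝ≥0∞) (h : α → β → ℝ≥0∞) :
    ∫⁻ x, ∫⁻ y, a * p x * (b * q y) * h x y ∂ν ∂μ =
      a * b * ∫⁻ x, ∫⁻ y, p x * q y * h x y ∂ν ∂μ := by
  have hab : a * b ≠ ⊤ := ENNReal.mul_ne_top ha hb
  simp only [← lintegral_const_mul' _ _ hab]
  refine lintegral_congr fun x ↦ lintegral_congr fun y ↦ ?_
  ring

end Lintegral

section MarkedPointProcess

variable {X M : Type*} [MeasurableSpace M]

/-- The intensity `ρ₁` of the locations of a marked point process with intensity `ρ`, for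
locations in `X` and marks in a measure space `(M, ν)`; `rho1` is the case of `ℝ^d` and `S^k`. -/
def locationIntensity (ν : Measure M) (ρ : X × M → ℝ≥0) (y : X) : ℝ≥0∞ :=
  ∫⁻ u, (ρ (y, u) : ℝ≥0∞) ∂ν

/-- The pair correlation function `g₁` of the locations of a marked point process with intensity
`ρ` and pair correlation function `g`, set to `0` where `ρ₁(y₁) ρ₁(y₂) = 0`; `gfun1` is the case
of `ℝ^d` and `S^k`. -/
def locationPairCorrelation (ν : Measure M) (ρ : X × M → ℝ≥0) (g : X × M → X × M → ℝ≥0)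
    (y₁ y₂ : X) : ℝ≥0∞ :=
  if 0 < locationIntensity ν ρ y₁ * locationIntensity ν ρ y₂ then
    (∫⁻ u₁, ∫⁻ u₂, (ρ (y₁, u₁) : ℝ≥0∞) * ρ (y₂, u₂) * g (y₁, u₁) (y₂, u₂) ∂ν ∂ν)
      / (locationIntensity ν ρ y₁ * locationIntensity ν ρ y₂)
  else 0

variable {ν : Measure M} {ρ : X × M → ℝ≥0} {g : X × M → X × M → ℝ≥0} {p : M → ℝ≥0∞}

lemma locationIntensity_ne_top {y : X}
    (hp : ∀ u, (ρ (y, u) : ℝ≥0∞) = locationIntensity ν ρ y * p u) :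
    locationIntensity ν ρ y ≠ ⊤ :=
  lintegral_ne_top_of_eq_lintegral_mul (fun _ ↦ ENNReal.coe_ne_top) hp

lemma locationPairCorrelation_eq_lintegral {y₁ y₂ : X} {h : M → M → ℝ≥0}
    (hpos : 0 < locationIntensity ν ρ y₁ * locationIntensity ν ρ y₂)
    (hp₁ : ∀ u, (ρ (y₁, u) : ℝ≥0∞) = locationIntensity ν ρ y₁ * p u)
    (hp₂ : ∀ u, (ρ (y₂, u) : ℝ≥0∞) = locationIntensity ν ρ y₂ * p u)
    (hgh : ∀ u₁ u₂, 0 < ρ (y₁, u₁) * ρ (y₂, u₂) → g (y₁, u₁) (y₂, u₂) = h u₁ u₂) :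
    locationPairCorrelation ν ρ g y₁ y₂ = ∫⁻ u₁, ∫⁻ u₂, p u₁ * p u₂ * h u₁ u₂ ∂ν ∂ν := by
  have hfin₁ := locationIntensity_ne_top hp₁
  have hfin₂ := locationIntensity_ne_top hp₂
  have hintegrand : ∀ u₁ u₂, (ρ (y₁, u₁) : ℝ≥0∞) * ρ (y₂, u₂) * g (y₁, u₁) (y₂, u₂) =
      locationIntensity ν ρ y₁ * p u₁ * (locationIntensity ν ρ y₂ * p u₂) * h u₁ u₂ := by
    intro u₁ u₂
    rw [← hp₁, ← hp₂, ← ENNReal.coe_mul]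
    rcases eq_zero_or_pos (ρ (y₁, u₁) * ρ (y₂, u₂)) with hzero | hρpos
    · simp [hzero]
    · rw [hgh u₁ u₂ hρpos]
  rw [locationPairCorrelation, if_pos hpos]
  simp only [hintegrand]
  rw [lintegral_lintegral_const_mul_mul_const_mul hfin₁ hfin₂, mul_comm,
    ENNReal.mul_div_cancel_right hpos.ne' (ENNReal.mul_ne_top hfin₁ hfin₂)]

theorem gfun1_formula_of_soirs_general [Sub X]
    (hp : ∀ y u, (ρ (y, u) : ℝ≥0∞) = locationIntensity ν ρ y * p u) {g₀ : X → M → M → ℝ≥0}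
    (hg : ∀ y₁ y₂ u₁ u₂, 0 < ρ (y₁, u₁) * ρ (y₂, u₂) →
      g (y₁, u₁) (y₂, u₂) = g₀ (y₁ - y₂) u₁ u₂) :
    (∀ y₁ y₂, 0 < locationIntensity ν ρ y₁ * locationIntensity ν ρ y₂ →
        locationPairCorrelation ν ρ g y₁ y₂ =
          ∫⁻ u₁, ∫⁻ u₂, p u₁ * p u₂ * g₀ (y₁ - y₂) u₁ u₂ ∂ν ∂ν) ∧
      (∀ y₁ y₂ y₁' y₂', 0 < locationIntensity ν ρ y₁ * locationIntensity ν ρ y₂ →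
        0 < locationIntensity ν ρ y₁' * locationIntensity ν ρ y₂' → y₁ - y₂ = y₁' - y₂' →
          locationPairCorrelation ν ρ g y₁ y₂ = locationPairCorrelation ν ρ g y₁' y₂') := by
  have hformula : ∀ y₁ y₂, 0 < locationIntensity ν ρ y₁ * locationIntensity ν ρ y₂ →
      locationPairCorrelation ν ρ g y₁ y₂ =
        ∫⁻ u₁, ∫⁻ u₂, p u₁ * p u₂ * g₀ (y₁ - y₂) u₁ u₂ ∂ν ∂ν := fun y₁ y₂ hpos ↦
    locationPairCorrelation_eq_lintegral hpos (hp y₁) (hp y₂) (hg y₁ y₂)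
  refine ⟨hformula, fun y₁ y₂ y₁' y₂' hpos hpos' hsub ↦ ?_⟩
  rw [hformula y₁ y₂ hpos, hformula y₁' y₂' hpos', hsub]

end MarkedPointProcess

/-- Under first order separability and second order intensity-reweighted stationarity,
the pair correlation function of the spatial components is
`g₁(y₁,y₂) = ∬ (ρ₂(u₁)/E(N))(ρ₂(u₂)/E(N)) g₀(y₁−y₂, d(u₁,u₂)) dν(u₁)dν(u₂)`;
in particular, where `ρ₁(y₁)ρ₁(y₂) > 0`, `g₁` depends only on `y₁ − y₂`. -/
theorem gfun1_formula_of_soirs (d k : ℕ) (hd : 1 ≤ d) (hk : 1 ≤ k)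
    (W : Set (Eucl d)) (hWm : MeasurableSet W) (hWb : Bornology.IsBounded W)
    (ρ : Eucl d × Sph k → ℝ≥0) (hρ : Measurable ρ)
    (hEN₀ : 0 < meanN W ρ) (hEN₁ : meanN W ρ < ⊤)
    (hsep1 : ∀ (y : Eucl d) (u : Sph k),
      (ρ (y, u) : ℝ≥0∞) * meanN W ρ = rho1 ρ y * rho2 W ρ u)
    (g : Eucl d × Sph k → Eucl d × Sph k → ℝ≥0)
    (hg : Measurable (Function.uncurry g))
    (hg0 : ∀ p q : Eucl d × Sph k, ρ p * ρ q = 0 → g p q = 0)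
    (g₀ : Eucl d → ℝ → ℝ≥0) (hg₀ : Measurable (Function.uncurry g₀))
    (hsoirs : ∀ (y₁ y₂ : Eucl d) (u₁ u₂ : Sph k), 0 < ρ (y₁, u₁) * ρ (y₂, u₂) →
      g (y₁, u₁) (y₂, u₂) = g₀ (y₁ - y₂) (gd u₁ u₂)) :
    (∀ y₁ y₂ : Eucl d, 0 < rho1 ρ y₁ * rho1 ρ y₂ →
        gfun1 ρ g y₁ y₂ =
          ∫⁻ u₁, (∫⁻ u₂, (rho2 W ρ u₁ / meanN W ρ) * (rho2 W ρ u₂ / meanN W ρ) *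
            (g₀ (y₁ - y₂) (gd u₁ u₂) : ℝ≥0∞) ∂(sphMeasure k)) ∂(sphMeasure k)) ∧
      (∀ y₁ y₂ y₁' y₂' : Eucl d, 0 < rho1 ρ y₁ * rho1 ρ y₂ →
        0 < rho1 ρ y₁' * rho1 ρ y₂' → y₁ - y₂ = y₁' - y₂' →
          gfun1 ρ g y₁ y₂ = gfun1 ρ g y₁' y₂') := by
  have hdensity : ∀ y u, (ρ (y, u) : ℝ≥0∞) = rho1 ρ y * (rho2 W ρ u / meanN W ρ) := fun y u ↦ by
    rw [← mul_div_assoc, ← hsep1, ENNReal.mul_div_cancel_right hEN₀.ne' hEN₁.ne]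
  exact gfun1_formula_of_soirs_general (g₀ := fun z u₁ u₂ ↦ g₀ z (gd u₁ u₂)) hdensity hsoirs
end
end

section
/- Assume: ρ : ℝ^d × S^k → (0,∞) is measurable and first order separable, i.e. ρ(y,u)·E(N) = ρ₁(y)ρ₂(u) for all (y,u); g₀ : ℝ^d × [0,π] → [0,∞) is measurable and g(y₁,u₁,y₂,u₂) = g₀(y₁−y₂, d(u₁,u₂)) for all arguments (second order intensity-reweighted stationarity); there exist measurable k₁ : ℝ^d×ℝ^d → [0,∞) and k₂ : S^k×S^k → [0,∞) with g(y₁,u₁,y₂,u₂) = k₁(y₁,y₂)k₂(u₁,u₂) for all arguments (second order separability); and 0 < E{N(N−1)} < ∞. Then there exist measurable g₀₁ : ℝ^d → [0,∞) and g₀₂ : [0,π] → [0,∞) with g₁(y₁,y₂) = g₀₁(y₁−y₂) and g₂(u₁,u₂) = g₀₂(d(u₁,u₂)) for all arguments, and for every e ∈ S^k, every r ≥ 0 and every s ∈ [0,π], the space-sphere K-function factorizes as K_e(r,s) = β·K₁(r)·K₂(s), where K₁(r) = ∫_{‖y‖≤r} g₀₁(y) dy and K₂(s) = ∫_{d(u,e)≤s}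 g₀₂(d(u,e)) dν(u). -/
open MeasureTheory Real Set
open scoped ENNReal NNReal RealInnerProductSpace Classical

noncomputable section

variable {d k : ℕ}

/-!
Averaging the pair correlation function `g` over one component against the normalized intensity of
that component gives, by first order separability, the pair correlation function of the other
component. If moreover `g = k₁ k₂`, the averages become `g₁ = c₂ k₁` and `g₂ = c₁ k₂`, with `cᵢ` the
mean of `kᵢ`, while Tonelli's theorem gives `E{N(N-1)} = E(N)² c₁ c₂`. Hence `g = β g₁ g₂`
pointwise, and integrating this identity factorizes the K-function.
-/

section SigmaFinite

variable {α : Type*} [MeasurableSpace α] {μ : Measure α} {f : α → ℝ≥0∞}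

theorem sigmaFinite_of_lintegral_ne_top (hf : AEMeasurable f μ) (hf₀ : ∀ᵐ x ∂μ, f x ≠ 0)
    (hfi : ∫⁻ x, f x ∂μ ≠ ∞) : SigmaFinite μ := by
  have : IsFiniteMeasure (μ.withDensity f) := isFiniteMeasure_withDensity hfi
  have hf_top : ∀ᵐ x ∂μ, f x ≠ ∞ := (ae_lt_top' hf hfi).mono fun _ hx ↦ hx.ne
  have hinv_top : ∀ᵐ x ∂μ.withDensity f, (f x)⁻¹ ≠ ∞ :=
    (withDensity_absolutelyContinuous μ f).ae_le
      (hf₀.mono fun _ hx ↦ ENNReal.inv_ne_top.mpr hx)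
  rw [← withDensity_inv_same₀ hf hf₀ hf_top]
  exact SigmaFinite.withDensity_of_ne_top hinv_top

end SigmaFinite

section PairIntegral

variable {X Y T : Type*} [MeasurableSpace X] [MeasurableSpace Y] [MeasurableSpace T]
  {μ : Measure X} {ν : Measure Y}

/-- The integral of a kernel `K` over pairs of points, weighted by the densities `f` and `f'`. -/
def pairIntegral (μ : Measure X) (f f' : X → ℝ≥0∞) (K : X → X → ℝ≥0∞) : ℝ≥0∞ :=
  ∫⁻ x, ∫⁻ x', f x * f' x' * K x x' ∂μ ∂μ

/-- The expected number of ordered pairs of distinct points, `E{N(N-1)}`, of a point process with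
intensity `ρ` and pair correlation function `g`. -/
def secondFactorialMoment (μ : Measure X) (ρ : X → ℝ≥0) (g : X → X → ℝ≥0) : ℝ≥0∞ :=
  pairIntegral μ (fun x ↦ ρ x) (fun x ↦ ρ x) (fun x x' ↦ g x x')

theorem pairIntegral_const_mul_weights {a b : ℝ≥0∞} (ha : a ≠ ∞) (hb : b ≠ ∞)
    (f f' : X → ℝ≥0∞) (K : X → X → ℝ≥0∞) :
    pairIntegral μ (fun x ↦ a * f x) (fun x ↦ b * f' x) K = a * b * pairIntegral μ f f' K := by
  simp only [pairIntegral, ← lintegral_const_mul' _ _ (ENNReal.mul_ne_top ha hb)]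
  exact lintegral_congr fun x ↦ lintegral_congr fun x' ↦ by ring

theorem pairIntegral_const_mul_kernel {c : ℝ≥0∞} (hc : c ≠ ∞) (f f' : X → ℝ≥0∞)
    (K : X → X → ℝ≥0∞) :
    pairIntegral μ f f' (fun x x' ↦ c * K x x') = c * pairIntegral μ f f' K := by
  simp only [pairIntegral, ← lintegral_const_mul' _ _ hc]
  exact lintegral_congr fun x ↦ lintegral_congr fun x' ↦ by ring

theorem pairIntegral_prod_mul [SFinite μ] [SFinite ν] {f f' : X → ℝ≥0∞} {h h' : Y → ℝ≥0∞}
    {K : X → X → ℝ≥0∞} {L : Y → Y → ℝ≥0∞} (hf : Measurable f) (hf' : Measurable f')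
    (hh : Measurable h) (hh' : Measurable h') (hK : Measurable (Function.uncurry K))
    (hL : Measurable (Function.uncurry L)) :
    pairIntegral (μ.prod ν) (fun p ↦ f p.1 * h p.2) (fun p ↦ f' p.1 * h' p.2)
        (fun p q ↦ K p.1 q.1 * L p.2 q.2) =
      pairIntegral μ f f' K * pairIntegral ν h h' L := by
  have hfK : Measurable (Function.uncurry fun x x' ↦ f x * f' x' * K x x') := by fun_prop
  have hhL : Measurable (Function.uncurry fun y y' ↦ h y * h' y' * L y y') := by fun_prop
  calc pairIntegral (μ.prod ν) (fun p ↦ f p.1 * h p.2) (fun p ↦ f' p.1 * h' p.2)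
        (fun p q ↦ K p.1 q.1 * L p.2 q.2)
      = ∫⁻ p, ∫⁻ q, (f p.1 * f' q.1 * K p.1 q.1) * (h p.2 * h' q.2 * L p.2 q.2)
          ∂μ.prod ν ∂μ.prod ν :=
        lintegral_congr fun p ↦ lintegral_congr fun q ↦ by ring
    _ = ∫⁻ p, (∫⁻ x', f p.1 * f' x' * K p.1 x' ∂μ) * (∫⁻ y', h p.2 * h' y' * L p.2 y' ∂ν)
          ∂μ.prod ν :=
        lintegral_congr fun p ↦ lintegral_prod_mul
          hfK.of_uncurry_left.aemeasurable hhL.of_uncurry_left.aemeasurable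
    _ = pairIntegral μ f f' K * pairIntegral ν h h' L :=
        lintegral_prod_mul hfK.lintegral_prod_right.aemeasurable
          hhL.lintegral_prod_right.aemeasurable

theorem measurable_pairIntegral [SFinite μ] {f f' : X → ℝ≥0∞} {K : T → X → X → ℝ≥0∞}
    (hf : Measurable f) (hf' : Measurable f')
    (hK : Measurable fun p : (T × X) × X ↦ K p.1.1 p.1.2 p.2) :
    Measurable fun t ↦ pairIntegral μ f f' (K t) := by
  have hfK : Measurable fun p : (T × X) × X ↦ f p.1.2 * f' p.2 * K p.1.1 p.1.2 p.2 :=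
    ((hf.comp (by fun_prop)).mul (hf'.comp (by fun_prop))).mul hK
  exact hfK.lintegral_prod_right'.lintegral_prod_right'

end PairIntegral

section Marginal

variable {X Y : Type*} [MeasurableSpace X] [MeasurableSpace Y] {μ : Measure X} {ν : Measure Y}
  {ρ : X × Y → ℝ≥0} {m : ℝ≥0∞}

/-- The intensity of the first components of a point process on `X × Y` with intensity `ρ`. The
intensity of the second components is obtained by applying it to `ρ ∘ Prod.swap`. -/
def marginalIntensity (ν : Measure Y) (ρ : X × Y → ℝ≥0) (x : X) : ℝ≥0∞ :=
  ∫⁻ y, ρ (x, y) ∂ν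

/-- The marginal intensity divided by `m`. When `m` is the total mass of `ρ`, it is the probability
density of the first component of a point. -/
def marginalDensity (ν : Measure Y) (ρ : X × Y → ℝ≥0) (m : ℝ≥0∞) (x : X) : ℝ≥0∞ :=
  marginalIntensity ν ρ x / m

/-- The pair correlation function of the first components of a point process on `X × Y` with
intensity `ρ` and pair correlation function `g`, set to `0` where the marginal intensity vanishes.
For the second components, precompose `ρ` and `g` with `Prod.swap`. -/
def marginalPairCorrelation (ν : Measure Y) (ρ : X × Y → ℝ≥0) (g : X × Y → X × Y → ℝ≥0)
    (x₁ x₂ : X) : ℝ≥0∞ :=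
  if 0 < marginalIntensity ν ρ x₁ * marginalIntensity ν ρ x₂ then
    pairIntegral ν (fun y ↦ ρ (x₁, y)) (fun y ↦ ρ (x₂, y)) (fun y₁ y₂ ↦ g (x₁, y₁) (x₂, y₂)) /
      (marginalIntensity ν ρ x₁ * marginalIntensity ν ρ x₂)
  else 0

/-- First order separability of a positive intensity `ρ`: up to the constant `m`, it is the product
of its marginals. If `ρ` has finite nonzero total mass, then `m` is this mass; keeping `m` as a
parameter makes the notion symmetric in the two components without appeal to Tonelli's theorem. -/
structure FirstOrderSeparable (μ : Measure X) (ν : Measure Y) (ρ : X × Y → ℝ≥0) (m : ℝ≥0∞) :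
    Prop where
  measurable : Measurable ρ
  pos : ∀ p, 0 < ρ p
  ne_zero : m ≠ 0
  ne_top : m ≠ ∞
  mul_eq : ∀ x y, ρ (x, y) * m = marginalIntensity ν ρ x * marginalIntensity μ (ρ ∘ Prod.swap) y

namespace FirstOrderSeparable

theorem swap (hρ : FirstOrderSeparable μ ν ρ m) :
    FirstOrderSeparable ν μ (ρ ∘ Prod.swap) m where
  measurable := hρ.measurable.comp measurable_swap
  pos p := hρ.pos p.swap
  ne_zero := hρ.ne_zero
  ne_top := hρ.ne_top
  mul_eq y x := (hρ.mul_eq x y).trans (mul_comm _ _)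

theorem marginalIntensity_mul_ne_zero (hρ : FirstOrderSeparable μ ν ρ m) (x : X) (y : Y) :
    marginalIntensity ν ρ x * marginalIntensity μ (ρ ∘ Prod.swap) y ≠ 0 := by
  rw [← hρ.mul_eq]
  exact mul_ne_zero (ENNReal.coe_ne_zero.mpr (hρ.pos _).ne') hρ.ne_zero

theorem marginalIntensity_ne_zero [Nonempty Y] (hρ : FirstOrderSeparable μ ν ρ m) (x : X) :
    marginalIntensity ν ρ x ≠ 0 :=
  left_ne_zero_of_mul (hρ.marginalIntensity_mul_ne_zero x (Classical.arbitrary Y))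

theorem marginalIntensity_ne_top [Nonempty Y] (hρ : FirstOrderSeparable μ ν ρ m) (x : X) :
    marginalIntensity ν ρ x ≠ ∞ := by
  obtain ⟨y⟩ := ‹Nonempty Y›
  have hmul : marginalIntensity ν ρ x * marginalIntensity μ (ρ ∘ Prod.swap) y ≠ ∞ := by
    rw [← hρ.mul_eq]
    exact ENNReal.mul_ne_top ENNReal.coe_ne_top hρ.ne_top
  exact (ENNReal.lt_top_of_mul_ne_top_left hmul
    (right_ne_zero_of_mul (hρ.marginalIntensity_mul_ne_zero x y))).ne

theorem sigmaFinite_right [Nonempty X] [Nonempty Y] (hρ : FirstOrderSeparable μ ν ρ m) :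
    SigmaFinite ν :=
  sigmaFinite_of_lintegral_ne_top
    (hρ.measurable.comp measurable_prodMk_left).coe_nnreal_ennreal.aemeasurable
    (ae_of_all _ fun _ ↦ ENNReal.coe_ne_zero.mpr (hρ.pos _).ne')
    (hρ.marginalIntensity_ne_top (Classical.arbitrary X))

theorem measurable_marginalDensity [SFinite ν] (hρ : FirstOrderSeparable μ ν ρ m) :
    Measurable (marginalDensity ν ρ m) :=
  hρ.measurable.coe_nnreal_ennreal.lintegral_prod_right'.div_const m

theorem eq_marginalIntensity_mul_marginalDensity (hρ : FirstOrderSeparable μ ν ρ m)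
    (x : X) (y : Y) :
    (ρ (x, y) : ℝ≥0∞) = marginalIntensity ν ρ x * marginalDensity μ (ρ ∘ Prod.swap) m y := by
  rw [marginalDensity, ← mul_div_assoc, ← hρ.mul_eq,
    ENNReal.mul_div_cancel_right hρ.ne_zero hρ.ne_top]

theorem eq_mul_marginalDensity_mul_marginalDensity (hρ : FirstOrderSeparable μ ν ρ m)
    (x : X) (y : Y) :
    (ρ (x, y) : ℝ≥0∞) = m * (marginalDensity ν ρ m x * marginalDensity μ (ρ ∘ Prod.swap) m y) := by
  rw [hρ.eq_marginalIntensity_mul_marginalDensity, ← mul_assoc, marginalDensity.eq_def ν,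
    ENNReal.mul_div_cancel hρ.ne_zero hρ.ne_top]

theorem marginalPairCorrelation_eq_pairIntegral [Nonempty Y] (hρ : FirstOrderSeparable μ ν ρ m)
    (g : X × Y → X × Y → ℝ≥0) (x₁ x₂ : X) :
    marginalPairCorrelation ν ρ g x₁ x₂ =
      pairIntegral ν (marginalDensity μ (ρ ∘ Prod.swap) m) (marginalDensity μ (ρ ∘ Prod.swap) m)
        (fun y₁ y₂ ↦ g (x₁, y₁) (x₂, y₂)) := by
  have hx₁ := hρ.marginalIntensity_ne_top x₁
  have hx₂ := hρ.marginalIntensity_ne_top x₂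
  have hne := mul_ne_zero (hρ.marginalIntensity_ne_zero x₁) (hρ.marginalIntensity_ne_zero x₂)
  rw [marginalPairCorrelation, if_pos (pos_iff_ne_zero.mpr hne)]
  simp only [hρ.eq_marginalIntensity_mul_marginalDensity]
  rw [pairIntegral_const_mul_weights hx₁ hx₂, mul_comm,
    ENNReal.mul_div_cancel_right hne (ENNReal.mul_ne_top hx₁ hx₂)]

section SecondOrder

variable {g : X × Y → X × Y → ℝ≥0} {k₁ : X → X → ℝ≥0} {k₂ : Y → Y → ℝ≥0}

theorem marginalPairCorrelation_eq_mul [Nonempty Y] (hρ : FirstOrderSeparable μ ν ρ m)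
    (hg : ∀ x₁ x₂ y₁ y₂, g (x₁, y₁) (x₂, y₂) = k₁ x₁ x₂ * k₂ y₁ y₂) (x₁ x₂ : X) :
    marginalPairCorrelation ν ρ g x₁ x₂ =
      k₁ x₁ x₂ * pairIntegral ν (marginalDensity μ (ρ ∘ Prod.swap) m)
        (marginalDensity μ (ρ ∘ Prod.swap) m) (fun y₁ y₂ ↦ k₂ y₁ y₂) := by
  simp only [hρ.marginalPairCorrelation_eq_pairIntegral, hg, ENNReal.coe_mul]
  exact pairIntegral_const_mul_kernel ENNReal.coe_ne_top _ _ _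

theorem measurable_marginalPairCorrelation [Nonempty Y] (hρ : FirstOrderSeparable μ ν ρ m)
    (hk₁ : Measurable (Function.uncurry k₁))
    (hg : ∀ x₁ x₂ y₁ y₂, g (x₁, y₁) (x₂, y₂) = k₁ x₁ x₂ * k₂ y₁ y₂) :
    Measurable (Function.uncurry (marginalPairCorrelation ν ρ g)) := by
  simp only [Function.uncurry_def, hρ.marginalPairCorrelation_eq_mul hg]
  exact hk₁.coe_nnreal_ennreal.mul_const _

theorem secondFactorialMoment_eq_mul [Nonempty X] [Nonempty Y]
    (hρ : FirstOrderSeparable μ ν ρ m) (hk₁ : Measurable (Function.uncurry k₁))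
    (hk₂ : Measurable (Function.uncurry k₂))
    (hg : ∀ x₁ x₂ y₁ y₂, g (x₁, y₁) (x₂, y₂) = k₁ x₁ x₂ * k₂ y₁ y₂) :
    secondFactorialMoment (μ.prod ν) ρ g =
      m ^ 2 *
        pairIntegral μ (marginalDensity ν ρ m) (marginalDensity ν ρ m) (fun x₁ x₂ ↦ k₁ x₁ x₂) *
        pairIntegral ν (marginalDensity μ (ρ ∘ Prod.swap) m) (marginalDensity μ (ρ ∘ Prod.swap) m)
          (fun y₁ y₂ ↦ k₂ y₁ y₂) := by
  have : SigmaFinite ν := hρ.sigmaFinite_right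
  have : SigmaFinite μ := hρ.swap.sigmaFinite_right
  have hfst : Measurable (marginalDensity ν ρ m) := hρ.measurable_marginalDensity
  have hsnd : Measurable (marginalDensity μ (ρ ∘ Prod.swap) m) :=
    hρ.swap.measurable_marginalDensity
  have hρ_eq : (fun p ↦ (ρ p : ℝ≥0∞)) =
      fun p ↦ m * (marginalDensity ν ρ m p.1 * marginalDensity μ (ρ ∘ Prod.swap) m p.2) :=
    funext fun p ↦ hρ.eq_mul_marginalDensity_mul_marginalDensity p.1 p.2
  have hg_eq : (fun p q ↦ (g p q : ℝ≥0∞)) = fun p q ↦ (k₁ p.1 q.1 : ℝ≥0∞) * k₂ p.2 q.2 :=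
    funext₂ fun p q ↦ by rw [← ENNReal.coe_mul, ← hg]
  rw [secondFactorialMoment, hρ_eq, hg_eq,
    pairIntegral_const_mul_weights hρ.ne_top hρ.ne_top,
    pairIntegral_prod_mul (K := fun x₁ x₂ ↦ k₁ x₁ x₂) (L := fun y₁ y₂ ↦ k₂ y₁ y₂)
      hfst hfst hsnd hsnd hk₁.coe_nnreal_ennreal hk₂.coe_nnreal_ennreal]
  ring

theorem pairCorrelation_eq_mul (hρ : FirstOrderSeparable μ ν ρ m)
    (hk₁ : Measurable (Function.uncurry k₁)) (hk₂ : Measurable (Function.uncurry k₂))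
    (hg : ∀ x₁ x₂ y₁ y₂, g (x₁, y₁) (x₂, y₂) = k₁ x₁ x₂ * k₂ y₁ y₂)
    (hN₀ : secondFactorialMoment (μ.prod ν) ρ g ≠ 0)
    (hN₁ : secondFactorialMoment (μ.prod ν) ρ g ≠ ∞) (x₁ x₂ : X) (y₁ y₂ : Y) :
    (g (x₁, y₁) (x₂, y₂) : ℝ≥0∞) =
      m ^ 2 / secondFactorialMoment (μ.prod ν) ρ g * marginalPairCorrelation ν ρ g x₁ x₂ *
        marginalPairCorrelation μ (ρ ∘ Prod.swap) (fun p q ↦ g p.swap q.swap) y₁ y₂ := by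
  have : Nonempty X := ⟨x₁⟩
  have : Nonempty Y := ⟨y₁⟩
  set N := secondFactorialMoment (μ.prod ν) ρ g
  set g₁ := marginalPairCorrelation ν ρ g
  set g₂ := marginalPairCorrelation μ (ρ ∘ Prod.swap) (fun p q ↦ g p.swap q.swap)
  set c₁ := pairIntegral μ (marginalDensity ν ρ m) (marginalDensity ν ρ m) (fun x₁ x₂ ↦ k₁ x₁ x₂)
  set c₂ := pairIntegral ν (marginalDensity μ (ρ ∘ Prod.swap) m)
    (marginalDensity μ (ρ ∘ Prod.swap) m) (fun y₁ y₂ ↦ k₂ y₁ y₂)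
  have hN : N = m ^ 2 * c₁ * c₂ := hρ.secondFactorialMoment_eq_mul hk₁ hk₂ hg
  have hg₁ : g₁ x₁ x₂ = k₁ x₁ x₂ * c₂ := hρ.marginalPairCorrelation_eq_mul hg x₁ x₂
  have hg₂ : g₂ y₁ y₂ = k₂ y₁ y₂ * c₁ :=
    hρ.swap.marginalPairCorrelation_eq_mul
      (fun v₁ v₂ z₁ z₂ ↦ (hg z₁ z₂ v₁ v₂).trans (mul_comm _ _)) y₁ y₂
  calc (g (x₁, y₁) (x₂, y₂) : ℝ≥0∞) = (m ^ 2 * c₁ * c₂) / N * (k₁ x₁ x₂ * k₂ y₁ y₂) := by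
        rw [← hN, ENNReal.div_self hN₀ hN₁, one_mul, hg, ENNReal.coe_mul]
    _ = m ^ 2 / N * (k₁ x₁ x₂ * c₂) * (k₂ y₁ y₂ * c₁) := by
        simp only [div_eq_mul_inv]
        ring
    _ = m ^ 2 / N * g₁ x₁ x₂ * g₂ y₁ y₂ := by rw [hg₁, hg₂]

theorem lintegral_pairCorrelation_eq_mul (hρ : FirstOrderSeparable μ ν ρ m)
    (hk₁ : Measurable (Function.uncurry k₁)) (hk₂ : Measurable (Function.uncurry k₂))
    (hg : ∀ x₁ x₂ y₁ y₂, g (x₁, y₁) (x₂, y₂) = k₁ x₁ x₂ * k₂ y₁ y₂)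
    (hN₀ : secondFactorialMoment (μ.prod ν) ρ g ≠ 0)
    (hN₁ : secondFactorialMoment (μ.prod ν) ρ g ≠ ∞)
    (μ' : Measure X) (ν' : Measure Y) (x₀ : X) (y₀ : Y) :
    ∫⁻ x, ∫⁻ y, g (x, y) (x₀, y₀) ∂ν' ∂μ' =
      m ^ 2 / secondFactorialMoment (μ.prod ν) ρ g *
        (∫⁻ x, marginalPairCorrelation ν ρ g x x₀ ∂μ') *
        ∫⁻ y, marginalPairCorrelation μ (ρ ∘ Prod.swap) (fun p q ↦ g p.swap q.swap) y y₀ ∂ν' := by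
  have : Nonempty X := ⟨x₀⟩
  have : Nonempty Y := ⟨y₀⟩
  have hg₁ : Measurable fun x ↦ marginalPairCorrelation ν ρ g x x₀ :=
    (hρ.measurable_marginalPairCorrelation hk₁ hg).of_uncurry_right
  have hg₂ : Measurable fun y ↦
      marginalPairCorrelation μ (ρ ∘ Prod.swap) (fun p q ↦ g p.swap q.swap) y y₀ :=
    (hρ.swap.measurable_marginalPairCorrelation hk₂ fun y₁ y₂ x₁ x₂ ↦
      (hg x₁ x₂ y₁ y₂).trans (mul_comm _ _)).of_uncurry_right
  simp only [hρ.pairCorrelation_eq_mul hk₁ hk₂ hg hN₀ hN₁ _ x₀ _ y₀]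
  rw [lintegral_lintegral_mul (hg₁.const_mul _).aemeasurable hg₂.aemeasurable,
    lintegral_const_mul _ hg₁]

end SecondOrder

end FirstOrderSeparable

end Marginal

theorem ssK_factorization_general {X Y T : Type*} [AddGroup X] [MeasurableSpace X]
    [MeasurableSub₂ X] [MeasurableSpace Y] [MeasurableSpace T] {μ : Measure X} {ν : Measure Y}
    {ρ : X × Y → ℝ≥0} (hρ : FirstOrderSeparable μ ν ρ (∫⁻ p, ρ p ∂μ.prod ν))
    {g : X × Y → X × Y → ℝ≥0} {g₀ : X → T → ℝ≥0} (hg₀ : Measurable (Function.uncurry g₀))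
    {δ : Y → Y → T} (hgg₀ : ∀ x₁ x₂ y₁ y₂, g (x₁, y₁) (x₂, y₂) = g₀ (x₁ - x₂) (δ y₁ y₂))
    {k₁ : X → X → ℝ≥0} {k₂ : Y → Y → ℝ≥0} (hk₁ : Measurable (Function.uncurry k₁))
    (hk₂ : Measurable (Function.uncurry k₂))
    (hgk : ∀ x₁ x₂ y₁ y₂, g (x₁, y₁) (x₂, y₂) = k₁ x₁ x₂ * k₂ y₁ y₂)
    (hN₀ : secondFactorialMoment (μ.prod ν) ρ g ≠ 0)
    (hN₁ : secondFactorialMoment (μ.prod ν) ρ g ≠ ∞) :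
    ∃ (g₀₁ : X → ℝ≥0∞) (g₀₂ : T → ℝ≥0∞),
      Measurable g₀₁ ∧ Measurable g₀₂ ∧
      (∀ x₁ x₂, marginalPairCorrelation ν ρ g x₁ x₂ = g₀₁ (x₁ - x₂)) ∧
      (∀ y₁ y₂, marginalPairCorrelation μ (ρ ∘ Prod.swap) (fun p q ↦ g p.swap q.swap) y₁ y₂ =
        g₀₂ (δ y₁ y₂)) ∧
      ∀ (e : Y) (μ' : Measure X) (ν' : Measure Y),
        ∫⁻ x, ∫⁻ y, g₀ x (δ y e) ∂ν' ∂μ' =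
          (∫⁻ p, ρ p ∂μ.prod ν) ^ 2 / secondFactorialMoment (μ.prod ν) ρ g *
            (∫⁻ x, g₀₁ x ∂μ') * ∫⁻ y, g₀₂ (δ y e) ∂ν' := by
  have : Nonempty Y := by
    by_contra hempty
    have := not_nonempty_iff.mp hempty
    exact hρ.ne_zero (lintegral_of_isEmpty _ _)
  have : SigmaFinite ν := hρ.sigmaFinite_right
  have : SigmaFinite μ := hρ.swap.sigmaFinite_right
  set M := ∫⁻ p, (ρ p : ℝ≥0∞) ∂μ.prod ν
  set g₀₂ : T → ℝ≥0∞ := fun t ↦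
    pairIntegral μ (marginalDensity ν ρ M) (marginalDensity ν ρ M) (fun x₁ x₂ ↦ g₀ (x₁ - x₂) t)
  have hg₁ (x₁ x₂ : X) :
      marginalPairCorrelation ν ρ g x₁ x₂ = marginalPairCorrelation ν ρ g (x₁ - x₂) 0 := by
    simp only [hρ.marginalPairCorrelation_eq_pairIntegral, hgg₀, sub_zero]
  have hg₂ (y₁ y₂ : Y) :
      marginalPairCorrelation μ (ρ ∘ Prod.swap) (fun p q ↦ g p.swap q.swap) y₁ y₂ =
        g₀₂ (δ y₁ y₂) := by
    simp only [hρ.swap.marginalPairCorrelation_eq_pairIntegral, Prod.swap_prod_mk, hgg₀]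
    rfl
  refine ⟨fun x ↦ marginalPairCorrelation ν ρ g x 0, g₀₂, ?_, ?_, hg₁, hg₂, fun e μ' ν' ↦ ?_⟩
  · exact (hρ.measurable_marginalPairCorrelation hk₁ hgk).of_uncurry_right
  · have hg₀_sub : Measurable fun p : (T × X) × X ↦ g₀ (p.1.2 - p.2) p.1.1 :=
      hg₀.comp ((measurable_fst.snd.sub measurable_snd).prodMk measurable_fst.fst)
    exact measurable_pairIntegral hρ.measurable_marginalDensity hρ.measurable_marginalDensity
      hg₀_sub.coe_nnreal_ennreal
  · have hK := hρ.lintegral_pairCorrelation_eq_mul hk₁ hk₂ hgk hN₀ hN₁ μ' ν' 0 e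
    simp only [hg₂] at hK
    simpa only [hgg₀, sub_zero] using hK

/-- Under SOIRS together with first and second order separability, the projected pair
correlation functions `g₁` and `g₂` have stationary/isotropic forms `g₀₁` and `g₀₂`, and
the space-sphere K-function factorizes as `K(r,s) = β·K₁(r)·K₂(s)`. -/
theorem ssK_factorization (d k : ℕ) (hd : 1 ≤ d) (hk : 1 ≤ k)
    (W : Set (Eucl d)) (hWm : MeasurableSet W) (hWb : Bornology.IsBounded W)
    (ρ : Eucl d × Sph k → ℝ≥0) (hρ : Measurable ρ) (hρpos : ∀ p, 0 < ρ p)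
    (hEN₀ : 0 < meanN W ρ) (hEN₁ : meanN W ρ < ⊤)
    (hsep1 : ∀ (y : Eucl d) (u : Sph k),
      (ρ (y, u) : ℝ≥0∞) * meanN W ρ = rho1 ρ y * rho2 W ρ u)
    (g : Eucl d × Sph k → Eucl d × Sph k → ℝ≥0)
    (hg : Measurable (Function.uncurry g))
    (g₀ : Eucl d → ℝ → ℝ≥0) (hg₀ : Measurable (Function.uncurry g₀))
    (hsoirs : ∀ (y₁ y₂ : Eucl d) (u₁ u₂ : Sph k),
      g (y₁, u₁) (y₂, u₂) = g₀ (y₁ - y₂) (gd u₁ u₂))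
    (k₁ : Eucl d → Eucl d → ℝ≥0) (k₂ : Sph k → Sph k → ℝ≥0)
    (hk₁ : Measurable (Function.uncurry k₁)) (hk₂ : Measurable (Function.uncurry k₂))
    (hsep2 : ∀ (y₁ y₂ : Eucl d) (u₁ u₂ : Sph k),
      g (y₁, u₁) (y₂, u₂) = k₁ y₁ y₂ * k₂ u₁ u₂)
    (hN2₀ : 0 < momN2 W ρ g) (hN2₁ : momN2 W ρ g < ⊤) :
    ∃ (g₀₁ : Eucl d → ℝ≥0∞) (g₀₂ : ℝ → ℝ≥0∞),
      Measurable g₀₁ ∧ Measurable g₀₂ ∧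
      (∀ y₁ y₂ : Eucl d, gfun1 ρ g y₁ y₂ = g₀₁ (y₁ - y₂)) ∧
      (∀ u₁ u₂ : Sph k, gfun2 W ρ g u₁ u₂ = g₀₂ (gd u₁ u₂)) ∧
      (∀ (e : Sph k) (r s : ℝ), 0 ≤ r → 0 ≤ s → s ≤ π →
        ssK (fun y t => (g₀ y t : ℝ≥0∞)) e r s =
          betaC W ρ g * (∫⁻ y in {y : Eucl d | ‖y‖ ≤ r}, g₀₁ y) *
            (∫⁻ u in {u : Sph k | gd u e ≤ s}, g₀₂ (gd u e) ∂(sphMeasure k))) := by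
  obtain ⟨g₀₁, g₀₂, hm₁, hm₂, h₁, h₂, hK⟩ := ssK_factorization_general
    (μ := volume.restrict W) (ν := sphMeasure k) ⟨hρ, hρpos, hEN₀.ne', hEN₁.ne, hsep1⟩
    hg₀ hsoirs hk₁ hk₂ hsep2 hN2₀.ne' hN2₁.ne
  exact ⟨g₀₁, g₀₂, hm₁, hm₂, h₁, h₂, fun e _ _ _ _ _ ↦ hK e _ _⟩
end
end

section
/- Let W ⊂ ℝ^d be a bounded measurable set with 0 < |W| < ∞. For all u₁, u₂ ∈ S^k, (1/|W|²) ∫_W ∫_W g(y₁,u₁,y₂,u₂) dy₁ dy₂ = 1 + c₂ C ∫_{S^k} k₀₂(d(u₁,u')) k₀₂(d(u₂,u')) dν(u'), where c₂ = (1/|W|²) ∫_{ℝ^d} ∫_W ∫_W k₀₁(y₁−y') k₀₁(y₂−y') dy₁ dy₂ dy' (equality holding in [0,∞]). In particular, the pair correlation function of the spherical components of the shot noise Cox process depends on the spatial kernel k₀₁ only through the constant c₂. -/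
open MeasureTheory Real Set
open scoped ENNReal NNReal RealInnerProductSpace Classical

noncomputable section

/-- The pair correlation function of a homogeneous shot noise Cox process on
`ℝ^d × S^k` with separable kernel `k₀₁ ⊗ k₀₂` and constant `C = m₂/(α m₁²)`. -/
noncomputable def sncpG {d k : ℕ} (C : ℝ≥0) (k₀₁ : Eucl d → ℝ≥0) (k₀₂ : ℝ → ℝ≥0)
    (y₁ : Eucl d) (u₁ : Sph k) (y₂ : Eucl d) (u₂ : Sph k) : ℝ≥0∞ :=
  1 + (C : ℝ≥0∞) * ∫⁻ y', (∫⁻ u', ((k₀₁ (y₁ - y') : ℝ≥0∞) * (k₀₁ (y₂ - y') : ℝ≥0∞) *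
    (k₀₂ (gd u₁ u') : ℝ≥0∞) * (k₀₂ (gd u₂ u') : ℝ≥0∞)) ∂(sphMeasure k))

/-! By separability, integrating over the cluster centre factors the excess `g - 1` into `C` times a
spatial overlap times a spherical overlap. Averaging over the window only touches the spatial
overlap, and Tonelli moves the integral over the spatial centre outermost, which produces `c₂`. -/

section Tonelli

variable {X Y Z : Type*} [MeasurableSpace X] [MeasurableSpace Y] [MeasurableSpace Z]
  {μ : Measure X} {ν : Measure Y} {ρ : Measure Z}

lemma lintegral_lintegral_lintegral_rotate [SFinite μ] [SFinite ν] [SFinite ρ]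
    {f : X → Y → Z → ℝ≥0∞} (hf : Measurable fun p : X × Y × Z => f p.1 p.2.1 p.2.2) :
    ∫⁻ x, ∫⁻ y, ∫⁻ z, f x y z ∂ρ ∂ν ∂μ = ∫⁻ z, ∫⁻ x, ∫⁻ y, f x y z ∂ν ∂μ ∂ρ := by
  have hf_inner (x : X) : Measurable fun p : Y × Z => f x p.1 p.2 :=
    hf.comp measurable_prodMk_left
  have hf_outer : Measurable fun p : X × Z => ∫⁻ y, f p.1 y p.2 ∂ν :=
    (hf.comp (by fun_prop : Measurable fun q : (X × Z) × Y =>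
      (q.1.1, q.2, q.1.2))).lintegral_prod_right'
  calc ∫⁻ x, ∫⁻ y, ∫⁻ z, f x y z ∂ρ ∂ν ∂μ
      = ∫⁻ x, ∫⁻ z, ∫⁻ y, f x y z ∂ν ∂ρ ∂μ :=
        lintegral_congr fun x => lintegral_lintegral_swap (hf_inner x).aemeasurable
    _ = ∫⁻ z, ∫⁻ x, ∫⁻ y, f x y z ∂ν ∂μ ∂ρ := lintegral_lintegral_swap hf_outer.aemeasurable

lemma lintegral_lintegral_one_add_const_mul [SFinite ν] (c : ℝ≥0∞) {f : X → Y → ℝ≥0∞}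
    (hf : Measurable (Function.uncurry f)) :
    ∫⁻ x, ∫⁻ y, (1 + c * f x y) ∂ν ∂μ =
      ν univ * μ univ + c * ∫⁻ x, ∫⁻ y, f x y ∂ν ∂μ := by
  have inner (x : X) : ∫⁻ y, (1 + c * f x y) ∂ν = ν univ + c * ∫⁻ y, f x y ∂ν := by
    rw [lintegral_add_left measurable_const, lintegral_const_mul _ hf.of_uncurry_left,
      lintegral_one]
  simp_rw [inner]
  rw [lintegral_add_left measurable_const, lintegral_const_mul _ hf.lintegral_prod_right,
    lintegral_const]

end Tonelli

section KernelOverlap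

variable {X Y : Type*} [MeasurableSpace X] [MeasurableSpace Y]

/-- The overlap `∫ K(x₁, y) K(x₂, y) dμ(y)` of the kernel `K` seen from `x₁` and from `x₂`: the
contribution of one coordinate of the cluster centres to the pair correlation. -/
def kernelOverlap (μ : Measure Y) (K : X → Y → ℝ≥0∞) (x₁ x₂ : X) : ℝ≥0∞ :=
  ∫⁻ y, K x₁ y * K x₂ y ∂μ

variable {K : X → Y → ℝ≥0∞}

lemma measurable_kernel_mul_kernel (hK : Measurable (Function.uncurry K)) :
    Measurable fun p : X × X × Y => K p.1 p.2.2 * K p.2.1 p.2.2 :=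
  (hK.comp (by fun_prop : Measurable fun p : X × X × Y => (p.1, p.2.2))).mul
    (hK.comp measurable_snd)

lemma measurable_kernelOverlap {μ : Measure Y} [SFinite μ] (hK : Measurable (Function.uncurry K)) :
    Measurable (Function.uncurry (kernelOverlap μ K)) :=
  ((measurable_kernel_mul_kernel hK).comp
    MeasurableEquiv.prodAssoc.measurable).lintegral_prod_right'

lemma lintegral_lintegral_kernelOverlap {μ : Measure Y} [SFinite μ] {ρ : Measure X} [SFinite ρ]
    (hK : Measurable (Function.uncurry K)) :
    ∫⁻ x₁, ∫⁻ x₂, kernelOverlap μ K x₁ x₂ ∂ρ ∂ρ =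
      ∫⁻ y, ∫⁻ x₁, ∫⁻ x₂, K x₁ y * K x₂ y ∂ρ ∂ρ ∂μ :=
  lintegral_lintegral_lintegral_rotate (measurable_kernel_mul_kernel hK)

end KernelOverlap

section PairCorrelation

variable {X Y U V : Type*} [MeasurableSpace Y] [MeasurableSpace V]

/-- The pair correlation function, at `(x₁, u₁)` and `(x₂, u₂)`, of a shot noise Cox process on
`X × U` whose cluster centres live on `Y × V` with intensity proportional to `μ ⊗ ν` and whose
kernel is the product of `K` and `L`. The centre spaces are kept separate from `X` and `U`, so that
no translation structure is involved. -/
def shotNoisePairCorrelation (μ : Measure Y) (ν : Measure V) (C : ℝ≥0∞) (K : X → Y → ℝ≥0∞)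
    (L : U → V → ℝ≥0∞) (x₁ : X) (u₁ : U) (x₂ : X) (u₂ : U) : ℝ≥0∞ :=
  1 + C * ∫⁻ y, ∫⁻ v, K x₁ y * K x₂ y * L u₁ v * L u₂ v ∂ν ∂μ

variable {μ : Measure Y} {ν : Measure V} {C : ℝ≥0∞} {K : X → Y → ℝ≥0∞} {L : U → V → ℝ≥0∞}
  {u₁ u₂ : U}

lemma shotNoisePairCorrelation_eq_one_add_mul_kernelOverlap {x₁ x₂ : X}
    (hK₁ : AEMeasurable (K x₁) μ) (hK₂ : AEMeasurable (K x₂) μ)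
    (hL₁ : AEMeasurable (L u₁) ν) (hL₂ : AEMeasurable (L u₂) ν) :
    shotNoisePairCorrelation μ ν C K L x₁ u₁ x₂ u₂ =
      1 + C * kernelOverlap ν L u₁ u₂ * kernelOverlap μ K x₁ x₂ := by
  have factor : ∫⁻ y, ∫⁻ v, K x₁ y * K x₂ y * (L u₁ v * L u₂ v) ∂ν ∂μ =
      kernelOverlap μ K x₁ x₂ * kernelOverlap ν L u₁ u₂ :=
    lintegral_lintegral_mul (hK₁.mul hK₂) (hL₁.mul hL₂)
  simp only [shotNoisePairCorrelation, mul_assoc] at factor ⊢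
  rw [factor, mul_comm (kernelOverlap μ K x₁ x₂)]

theorem sncp_spherical_pcf_general [MeasurableSpace X] [SFinite μ] {ρ : Measure X} {W : Set X}
    (hW₀ : ρ W ≠ 0) (hW₁ : ρ W ≠ ⊤) (hK : Measurable (Function.uncurry K))
    (hL₁ : AEMeasurable (L u₁) ν) (hL₂ : AEMeasurable (L u₂) ν) :
    (∫⁻ x₁ in W, ∫⁻ x₂ in W, shotNoisePairCorrelation μ ν C K L x₁ u₁ x₂ u₂ ∂ρ ∂ρ) / ρ W ^ 2 =
      1 + (∫⁻ y, ∫⁻ x₁ in W, ∫⁻ x₂ in W, K x₁ y * K x₂ y ∂ρ ∂ρ ∂μ) / ρ W ^ 2 * C *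
        ∫⁻ v, L u₁ v * L u₂ v ∂ν := by
  have : IsFiniteMeasure (ρ.restrict W) := isFiniteMeasure_restrict.mpr hW₁
  have hK_left (x : X) : AEMeasurable (K x) μ := hK.of_uncurry_left.aemeasurable
  simp_rw [fun x₁ x₂ => shotNoisePairCorrelation_eq_one_add_mul_kernelOverlap (C := C)
    (hK_left x₁) (hK_left x₂) hL₁ hL₂]
  rw [lintegral_lintegral_one_add_const_mul _ (measurable_kernelOverlap hK),
    lintegral_lintegral_kernelOverlap hK, Measure.restrict_apply_univ, ← sq, ENNReal.add_div,
    ENNReal.div_self (pow_ne_zero 2 hW₀) (ENNReal.pow_ne_top hW₁)]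
  simp only [div_eq_mul_inv, kernelOverlap]
  ring

end PairCorrelation

lemma continuous_gd_s18 {k : ℕ} : Continuous fun p : Sph k × Sph k => gd p.1 p.2 :=
  Real.continuous_arccos.comp (by fun_prop)

lemma measurable_comp_gd {k : ℕ} {f : ℝ → ℝ≥0} (hf : Measurable f) (u : Sph k) :
    Measurable fun v : Sph k => (f (gd u v) : ℝ≥0∞) :=
  (hf.comp (continuous_gd_s18.comp (Continuous.prodMk_right u)).measurable).coe_nnreal_ennreal

/-- The pair correlation function of the spherical components of a shot noise Cox process
depends on the spatial kernel `k₀₁` only through the constant `c₂`. -/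
theorem sncp_spherical_pcf (d k : ℕ) (hd : 1 ≤ d) (hk : 1 ≤ k)
    (W : Set (Eucl d)) (hWm : MeasurableSet W) (hWb : Bornology.IsBounded W)
    (hW₀ : 0 < volume W) (hW₁ : volume W < ⊤)
    (C : ℝ≥0) (k₀₁ : Eucl d → ℝ≥0) (k₀₂ : ℝ → ℝ≥0)
    (hk₀₁ : Measurable k₀₁) (hk₀₂ : Measurable k₀₂) (u₁ u₂ : Sph k) :
    (∫⁻ y₁ in W, ∫⁻ y₂ in W, sncpG C k₀₁ k₀₂ y₁ u₁ y₂ u₂) / (volume W) ^ 2 =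
      1 + ((∫⁻ y', ∫⁻ y₁ in W, ∫⁻ y₂ in W,
              ((k₀₁ (y₁ - y') : ℝ≥0∞) * (k₀₁ (y₂ - y') : ℝ≥0∞))) / (volume W) ^ 2) *
        (C : ℝ≥0∞) *
          ∫⁻ u', ((k₀₂ (gd u₁ u') : ℝ≥0∞) * (k₀₂ (gd u₂ u') : ℝ≥0∞)) ∂(sphMeasure k) :=
  sncp_spherical_pcf_general (L := fun u v => k₀₂ (gd u v)) hW₀.ne' hW₁.ne
    (hk₀₁.comp measurable_sub).coe_nnreal_ennreal
    (measurable_comp_gd hk₀₂ u₁).aemeasurable (measurable_comp_gd hk₀₂ u₂).aemeasurable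
end
end
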